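/- (Proposition 1, classical case.) Suppose the total click probability on Bob's side is independent of the message: there exists c : ℬ → ℝ with c(b) > 0 such that Σ_i p_i η_i(A,b) = c(b) for every A ∈ M and b ∈ ℬ. Then the detection-loophole statistics P_DL admit a classical model over the same message set M: there exist nonnegative reals R(B|A,b) with Σ_{B∈𝒪} R(B|A,b) = 1 for every A, b, such that P_DL(B|a,b) = Σ_{A∈M} R(B|A,b) P(A|a) for all B, a, b. In particular, P_DL admits a d-dimensional classical model with d = |M|, so if P_DL does not admit a d-dimensional classical model then neither does P(B|a,b) := Σ_{i,A} p_i P_i(B|A,b) P(A|a). -/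

import Mathlib

/-- `Q B a b` (the probability of output `B` given inputs `a`, `b`) admits a
`d`-dimensional classical model: there are a message set of cardinality `d`
(represented by `Fin d`), distributions `S(·|a)` on the messages and
`R(·|A,b)` on the outputs, with `Q(B|a,b) = ∑ A, R(B|A,b) S(A|a)`. -/
def AdmitsClassicalModel {𝒜 ℬ 𝒪 : Type*} [Fintype 𝒜] [Fintype ℬ] [Fintype 𝒪]
    (d : ℕ) (Q : 𝒪 → 𝒜 → ℬ → ℝ) : Prop :=
  ∃ (S : 𝒜 → Fin d → ℝ) (R : Fin d → ℬ → 𝒪 → ℝ),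
    (∀ a A, 0 ≤ S a A) ∧ (∀ a, ∑ A, S a A = 1) ∧
    (∀ A b B, 0 ≤ R A b B) ∧ (∀ A b, ∑ B, R A b B = 1) ∧
    (∀ B a b, Q B a b = ∑ A, R A b B * S a A)

/-- Proposition 1, classical case: if the total click probability
on Bob's side `∑ i, p i * η i A b = c b` is independent of the message `A` (and
positive), then the detection-loophole statistics `P_DL` admit a classical model
over the same message set `M`; in particular `P_DL` admits a `|M|`-dimensional
classical model, so if `P_DL` admits no `|M|`-dimensional classical model then
neither do the no-attack statistics `P(B|a,b) = ∑ i A, p i * Pᵢ(B|A,b) * P(A|a)`. -/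
theorem prop1_classical
    {𝒜 ℬ M 𝒪 I : Type*}
    [Fintype 𝒜] [Fintype ℬ] [Fintype M] [Fintype 𝒪] [Fintype I]
    [Nonempty 𝒜] [Nonempty ℬ] [Nonempty M] [Nonempty 𝒪] [Nonempty I]
    (p : I → ℝ) (hp : ∀ i, 0 ≤ p i) (hp1 : ∑ i, p i = 1)
    (P : 𝒜 → M → ℝ) (hP : ∀ a A, 0 ≤ P a A) (hP1 : ∀ a, ∑ A, P a A = 1)
    (Pi : I → M → ℬ → 𝒪 → ℝ)
    (hPi : ∀ i A b B, 0 ≤ Pi i A b B) (hPi1 : ∀ i A b, ∑ B, Pi i A b B = 1)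
    (η : I → M → ℬ → ℝ) (hη : ∀ i A b, 0 ≤ η i A b ∧ η i A b ≤ 1)
    -- the click probability D(a,b) is strictly positive
    (D : 𝒜 → ℬ → ℝ) (hD : ∀ a b, D a b = ∑ i, ∑ A, p i * η i A b * P a A)
    (hDpos : ∀ a b, 0 < D a b)
    -- the detection-loophole statistics
    (PDL : 𝒪 → 𝒜 → ℬ → ℝ)
    (hPDL : ∀ B a b, PDL B a b =
      (∑ i, ∑ A, p i * η i A b * Pi i A b B * P a A) / D a b)
    -- hypothesis: the click probability on Bob's side is independent of A
    (c : ℬ → ℝ) (hc : ∀ b, 0 < c b)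
    (hindep : ∀ A b, ∑ i, p i * η i A b = c b) :
    -- P_DL admits a classical model over the same message set M
    (∃ R : M → ℬ → 𝒪 → ℝ,
      (∀ A b B, 0 ≤ R A b B) ∧ (∀ A b, ∑ B, R A b B = 1) ∧
      (∀ B a b, PDL B a b = ∑ A, R A b B * P a A)) ∧
    -- in particular: if P_DL admits no |M|-dimensional classical model,
    -- neither do the statistics without the attack
    (¬ AdmitsClassicalModel (Fintype.card M) PDL →
      ¬ AdmitsClassicalModel (Fintype.card M)
        (fun B a b => ∑ i, ∑ A, p i * Pi i A b B * P a A)) := by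
  have key : ∃ R : M → ℬ → 𝒪 → ℝ,
      (∀ A b B, 0 ≤ R A b B) ∧ (∀ A b, ∑ B, R A b B = 1) ∧
      (∀ B a b, PDL B a b = ∑ A, R A b B * P a A) := by
    refine ⟨fun A b B => (∑ i, p i * η i A b * Pi i A b B) / c b, ?_, ?_, ?_⟩
    · intro A b B
      exact div_nonneg (Finset.sum_nonneg fun i _ =>
        mul_nonneg (mul_nonneg (hp i) (hη i A b).1) (hPi i A b B)) (hc b).le
    · intro A b
      rw [← Finset.sum_div, Finset.sum_comm]
      simp_rw [← Finset.mul_sum, hPi1, mul_one]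
      rw [hindep, div_self (hc b).ne']
    · intro B a b
      have hDc : D a b = c b := by
        rw [hD, Finset.sum_comm]
        simp_rw [← Finset.sum_mul, hindep]
        rw [← Finset.mul_sum, hP1, mul_one]
      rw [hPDL, hDc, Finset.sum_comm, Finset.sum_div]
      refine Finset.sum_congr rfl fun A _ => ?_
      rw [← Finset.sum_mul, div_mul_eq_mul_div]
  refine ⟨key, fun hno => absurd ?_ hno⟩
  obtain ⟨R, hR, hR1, hRP⟩ := key
  let e := (Fintype.equivFin M).symm
  refine ⟨fun a A => P a (e A), fun A => R (e A), fun a A => hP a _, fun a => ?_,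
    fun A => hR _, fun A => hR1 _, fun B a b => ?_⟩
  · rw [← hP1 a]
    exact Equiv.sum_comp e (fun A => P a A)
  · rw [hRP]
    exact (Equiv.sum_comp e (fun A => R A b B * P a A)).symm
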